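/- (Weighted Poincaré inequality.) Let φ:ℝ^N→ℝ be continuous with nonempty compact support of diameter d, with 0≤φ≤1, and such that the superlevel sets {x∈ℝ^N : φ(x)≥a} are convex for every a≤1. Then for every continuously differentiable function u:ℝ^N→ℝ such that u and |∇u| are square integrable, ∫_{ℝ^N} (u(x)−u_φ)² φ(x) dx ≤ (2 d² μ_N(supp φ)/‖φ‖_{L¹(ℝ^N)}) · ∫_{ℝ^N} |∇u(x)|² φ(x) dx, where u_φ = (∫_{ℝ^N} u(x)φ(x)dx)/(∫_{ℝ^N} φ(x)dx). -/

import Mathlib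

open MeasureTheory Set Filter
open scoped ENNReal NNReal Topology

/-!
Let `μ` satisfy the Prékopa–Leindler inequality, as Lebesgue measure does, and let `K` be compact
and convex. Restricting `μ` to `K` preserves the inequality, and multiplying by a Gaussian turns it
into Maurey's property (τ) by the parallelogram identity: if `f x - g y ≤ κ ‖x - y‖ ^ 2`, then the
product of the integrals of `exp f` and `exp (-g)` is at most the square of the total mass.
For `f = ε u`, where `g` differs from `f` by about `ε ^ 2 ‖∇u‖ ^ 2 / (4 κ)`, letting `ε → 0` gives a
Poincaré inequality for the tilted measure. On `K` a Gaussian of width comparable to the diameter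
is bounded below, so it can be removed at the cost of a factor `e`, and the measure on `K` itself
has Poincaré constant `e / 2 * diam K ^ 2`.

For a weight `φ ≤ M`, the total mass times the variance is half the double integral of
`(u x - u y) ^ 2 φ(x) φ(y)`; bound `φ(x) φ(y)` by `M * min (φ x) (φ y)`, and integrate the
inequality for the convex sets `{φ ≥ a}` over `a`. The constant obtained is `e / 2 < 2`.
-/

/-- The Prékopa–Leindler inequality for `μ` at the midpoint, which says that `μ` is log-concave. The
weight is squared, `f x * g y ≤ h (midpoint ℝ x y) ^ 2`, so that no roots of `ℝ≥0∞`-valued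
functions are needed. -/
def PrekopaLeindler {E : Type*} [AddCommGroup E] [Module ℝ E] [MeasurableSpace E]
    (μ : Measure E) : Prop :=
  ∀ ⦃f g h : E → ℝ≥0∞⦄, Measurable f → Measurable g → Measurable h →
    (∀ x y, f x * g y ≤ h (midpoint ℝ x y) ^ 2) →
      (∫⁻ x, f x ∂μ) * ∫⁻ x, g x ∂μ ≤ (∫⁻ x, h x ∂μ) ^ 2

section OneDimensional

theorem volume_add_le_two_mul_of_isCompact {K L C : Set ℝ} (hK : IsCompact K)
    (hL : IsCompact L) (hKne : K.Nonempty) (hLne : L.Nonempty)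
    (hC : ∀ x ∈ K, ∀ y ∈ L, midpoint ℝ x y ∈ C) : volume K + volume L ≤ 2 * volume C := by
  obtain ⟨a, haK, ha⟩ := hK.exists_isGreatest hKne
  obtain ⟨b, hbL, hb⟩ := hL.exists_isLeast hLne
  have two_mul_midpoint (x y : ℝ) : 2 * midpoint ℝ x y = x + y := by
    rw [← smul_eq_mul, two_smul, midpoint_add_self]
  -- `K + min L` and `max K + L` both lie in `2 • C` and overlap only at `max K + min L`.
  have inter_subset : (· + b) '' K ∩ (a + ·) '' L ⊆ {a + b} := by
    rintro _ ⟨⟨x, hx, rfl⟩, ⟨y, hy, hxy⟩⟩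
    have := ha hx
    have := hb hy
    simp only [mem_singleton_iff] at hxy ⊢
    linarith
  have union_subset : (· + b) '' K ∪ (a + ·) '' L ⊆ (2 * ·) '' C := by
    rintro _ (⟨x, hx, rfl⟩ | ⟨y, hy, rfl⟩)
    · exact ⟨_, hC x hx b hbL, two_mul_midpoint x b⟩
    · exact ⟨_, hC a haK y hy, two_mul_midpoint a y⟩
  calc volume K + volume L = volume ((· + b) '' K) + volume ((a + ·) '' L) := by
        rw [image_add_right, image_add_left, measure_preimage_add_right, measure_preimage_add]
    _ = volume ((· + b) '' K ∪ (a + ·) '' L) :=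
        (measure_union₀ (hL.image (by fun_prop)).measurableSet.nullMeasurableSet
          (measure_mono_null inter_subset (by simp))).symm
    _ ≤ volume ((2 * ·) '' C) := measure_mono union_subset
    _ = 2 * volume C := (Measure.addHaar_smul (volume : Measure ℝ) 2 C).trans (by simp)

theorem volume_add_le_two_mul {A B C : Set ℝ} (hA : MeasurableSet A)
    (hB : MeasurableSet B) (hAne : A.Nonempty) (hBne : B.Nonempty)
    (hC : ∀ x ∈ A, ∀ y ∈ B, midpoint ℝ x y ∈ C) : volume A + volume B ≤ 2 * volume C := by
  obtain ⟨a, ha⟩ := hAne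
  obtain ⟨b, hb⟩ := hBne
  rw [hA.measure_eq_iSup_isCompact, hB.measure_eq_iSup_isCompact]
  simp only [iSup_and']
  refine ENNReal.biSup_add_biSup_le' ⟨∅, empty_subset A, isCompact_empty⟩
    ⟨∅, empty_subset B, isCompact_empty⟩ fun K ⟨hKA, hK⟩ L ⟨hLB, hL⟩ => ?_
  calc volume K + volume L ≤ volume (insert a K) + volume (insert b L) := by
        gcongr <;> exact subset_insert _ _
    _ ≤ 2 * volume C :=
        volume_add_le_two_mul_of_isCompact (hK.insert a) (hL.insert b) (insert_nonempty a K)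
          (insert_nonempty b L) fun x hx y hy =>
            hC x (insert_subset ha hKA hx) y (insert_subset hb hLB hy)

theorem lintegral_eq_lintegral_measure_ofReal_lt {α : Type*} [MeasurableSpace α] (μ : Measure α)
    {f : α → ℝ≥0∞} (hf : Measurable f) (hf_top : ∀ x, f x ≠ ∞) :
    ∫⁻ x, f x ∂μ = ∫⁻ t in Ioi (0 : ℝ), μ {x | ENNReal.ofReal t < f x} := by
  calc ∫⁻ x, f x ∂μ = ∫⁻ x, ENNReal.ofReal (f x).toReal ∂μ := by
        simp only [ENNReal.ofReal_toReal (hf_top _)]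
    _ = ∫⁻ t in Ioi (0 : ℝ), μ {x | t < (f x).toReal} :=
        lintegral_eq_lintegral_meas_lt μ (.of_forall fun _ => ENNReal.toReal_nonneg)
          hf.ennreal_toReal.aemeasurable
    _ = ∫⁻ t in Ioi (0 : ℝ), μ {x | ENNReal.ofReal t < f x} :=
        setLIntegral_congr_fun measurableSet_Ioi fun t ht => by
          simp only [ENNReal.ofReal_lt_iff_lt_toReal (le_of_lt ht) (hf_top _)]

theorem mul_le_sq_of_add_le_two_mul {x y z : ℝ≥0∞} (h : x + y ≤ 2 * z) : x * y ≤ z ^ 2 := by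
  wlog hxy : x ≤ y generalizing x y
  · rw [mul_comm]
    exact this (add_comm x y ▸ h) (le_of_not_ge hxy)
  obtain ⟨t, rfl⟩ := exists_add_of_le hxy
  refine (ENNReal.mul_le_mul_iff_right (a := 4) (by simp) (by simp)).1 ?_
  calc 4 * (x * (x + t)) ≤ 4 * (x * (x + t)) + t ^ 2 := le_self_add
    _ = (x + (x + t)) ^ 2 := by ring
    _ ≤ (2 * z) ^ 2 := by gcongr
    _ = 4 * z ^ 2 := by ring

theorem lintegral_add_lintegral_le_two_mul {f g h : ℝ → ℝ≥0∞} (hf : Measurable f)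
    (hg : Measurable g) (hh : Measurable h) (hf_sup : ⨆ x, f x = 1) (hg_sup : ⨆ x, g x = 1)
    (hfgh : ∀ x y, f x * g y ≤ h (midpoint ℝ x y) ^ 2) :
    (∫⁻ x, f x) + ∫⁻ x, g x ≤ 2 * ∫⁻ x, h x := by
  have ne_top_of_le_one {k : ℝ → ℝ≥0∞} (hk : ∀ x, k x ≤ 1) (x : ℝ) : k x ≠ ∞ :=
    ((hk x).trans_lt ENNReal.one_lt_top).ne
  have measurable_measure_lt (k : ℝ → ℝ≥0∞) :
      Measurable fun t : ℝ => volume {x | ENNReal.ofReal t < k x} :=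
    Antitone.measurable fun s t hst => measure_mono fun x (hx : _ < _) =>
      (ENNReal.ofReal_le_ofReal hst).trans_lt hx
  refine le_trans ?_ (mul_le_mul_right (lintegral_mono fun x => min_le_left (h x) 1) 2)
  rw [lintegral_eq_lintegral_measure_ofReal_lt _ hf
      (ne_top_of_le_one fun x => hf_sup ▸ le_iSup f x),
    lintegral_eq_lintegral_measure_ofReal_lt _ hg
      (ne_top_of_le_one fun x => hg_sup ▸ le_iSup g x),
    lintegral_eq_lintegral_measure_ofReal_lt _ (hh.min measurable_const)
      (ne_top_of_le_one fun x => min_le_right (h x) 1),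
    ← lintegral_add_left (measurable_measure_lt f),
    ← lintegral_const_mul _ (measurable_measure_lt _)]
  refine lintegral_mono fun t => ?_
  rcases lt_or_ge (ENNReal.ofReal t) 1 with ht | ht
  · have level_nonempty {k : ℝ → ℝ≥0∞} (hk : ⨆ x, k x = 1) :
        {x | ENNReal.ofReal t < k x}.Nonempty := lt_iSup_iff.1 (ht.trans_eq hk.symm)
    refine volume_add_le_two_mul (measurableSet_lt measurable_const hf)
      (measurableSet_lt measurable_const hg) (level_nonempty hf_sup) (level_nonempty hg_sup)
      fun x hx y hy => lt_min ?_ ht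
    refine lt_of_pow_lt_pow_left' 2 (lt_of_lt_of_le ?_ (hfgh x y))
    exact sq (ENNReal.ofReal t) ▸ ENNReal.mul_lt_mul hx hy
  · have level_eq_empty {k : ℝ → ℝ≥0∞} (hk : ⨆ x, k x = 1) :
        {x | ENNReal.ofReal t < k x} = ∅ :=
      eq_empty_of_forall_notMem fun x => not_lt.2 ((hk ▸ le_iSup k x).trans ht)
    simp [level_eq_empty hf_sup, level_eq_empty hg_sup]

theorem lintegral_mul_lintegral_le_sq_of_iSup_ne_top {f g h : ℝ → ℝ≥0∞} (hf : Measurable f)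
    (hg : Measurable g) (hh : Measurable h) (hf_sup : ⨆ x, f x ≠ ∞) (hg_sup : ⨆ x, g x ≠ ∞)
    (hfgh : ∀ x y, f x * g y ≤ h (midpoint ℝ x y) ^ 2) :
    (∫⁻ x, f x) * ∫⁻ x, g x ≤ (∫⁻ x, h x) ^ 2 := by
  set a := ⨆ x, f x with ha
  set b := ⨆ x, g x with hb
  rcases eq_or_ne a 0 with ha₀ | ha₀
  · simp [ENNReal.iSup_eq_zero.1 (ha.symm.trans ha₀)]
  rcases eq_or_ne b 0 with hb₀ | hb₀
  · simp [ENNReal.iSup_eq_zero.1 (hb.symm.trans hb₀)]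
  obtain ⟨c, hc⟩ : ∃ c : ℝ≥0∞, c ^ 2 = a⁻¹ * b⁻¹ :=
    ⟨_, ENNReal.rpow_inv_natCast_pow (n := 2) two_ne_zero _⟩
  have normalized : a⁻¹ * (∫⁻ x, f x) + b⁻¹ * ∫⁻ x, g x ≤ 2 * (c * ∫⁻ x, h x) := by
    rw [← lintegral_const_mul _ hf, ← lintegral_const_mul _ hg, ← lintegral_const_mul _ hh]
    refine lintegral_add_lintegral_le_two_mul (hf.const_mul _) (hg.const_mul _) (hh.const_mul _)
      (by rw [← ENNReal.mul_iSup, ENNReal.inv_mul_cancel ha₀ hf_sup])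
      (by rw [← ENNReal.mul_iSup, ENNReal.inv_mul_cancel hb₀ hg_sup]) fun x y => ?_
    rw [mul_pow, hc, mul_mul_mul_comm]
    gcongr
    exact hfgh x y
  refine (ENNReal.mul_le_mul_iff_right (a := a⁻¹ * b⁻¹) (by simp [hf_sup, hg_sup])
    (by simp [ENNReal.mul_eq_top, ha₀, hb₀])).1 ?_
  calc a⁻¹ * b⁻¹ * ((∫⁻ x, f x) * ∫⁻ x, g x)
      = (a⁻¹ * ∫⁻ x, f x) * (b⁻¹ * ∫⁻ x, g x) := mul_mul_mul_comm ..
    _ ≤ (c * ∫⁻ x, h x) ^ 2 := mul_le_sq_of_add_le_two_mul normalized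
    _ = a⁻¹ * b⁻¹ * (∫⁻ x, h x) ^ 2 := by rw [mul_pow, hc]

theorem lintegral_eq_iSup_lintegral_min_natCast {α : Type*} [MeasurableSpace α] (μ : Measure α)
    {f : α → ℝ≥0∞} (hf : Measurable f) :
    ∫⁻ x, f x ∂μ = ⨆ n : ℕ, ∫⁻ x, min (f x) n ∂μ := by
  rw [← lintegral_iSup (fun n => hf.min measurable_const) fun m n hmn x => by dsimp only; gcongr]
  congr with x
  rw [← inf_iSup_eq, ENNReal.iSup_natCast, inf_top_eq]

theorem prekopaLeindler_volume_real : PrekopaLeindler (volume : Measure ℝ) := by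
  intro f g h hf hg hh hfgh
  have iSup_min_ne_top (k : ℝ → ℝ≥0∞) (n : ℕ) : ⨆ x, min (k x) n ≠ ∞ :=
    ((iSup_le fun x => min_le_right (k x) n).trans_lt (ENNReal.natCast_lt_top n)).ne
  rw [lintegral_eq_iSup_lintegral_min_natCast _ hf, lintegral_eq_iSup_lintegral_min_natCast _ hg]
  simp only [ENNReal.iSup_mul, ENNReal.mul_iSup]
  refine iSup₂_le fun m n => ?_
  refine lintegral_mul_lintegral_le_sq_of_iSup_ne_top (hf.min measurable_const)
    (hg.min measurable_const) hh (iSup_min_ne_top f _) (iSup_min_ne_top g _) fun x y => ?_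
  exact (mul_le_mul' (min_le_left _ _) (min_le_left _ _)).trans (hfgh x y)

end OneDimensional

namespace PrekopaLeindler

variable {E F : Type*} [AddCommGroup E] [Module ℝ E] [MeasurableSpace E]
  [AddCommGroup F] [Module ℝ F] [MeasurableSpace F] {μ : Measure E} {ν : Measure F}

theorem const_smul (hμ : PrekopaLeindler μ) (c : ℝ≥0∞) : PrekopaLeindler (c • μ) := by
  intro f g h hf hg hh hfgh
  simp only [lintegral_smul_measure, smul_eq_mul, mul_pow]
  rw [mul_mul_mul_comm, ← sq]
  gcongr
  exact hμ hf hg hh hfgh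

theorem map (hμ : PrekopaLeindler μ) (L : E →ₗ[ℝ] F) (hL : Measurable L) :
    PrekopaLeindler (μ.map L) := by
  intro f g h hf hg hh hfgh
  rw [lintegral_map hf hL, lintegral_map hg hL, lintegral_map hh hL]
  refine hμ (hf.comp hL) (hg.comp hL) (hh.comp hL) fun x y => ?_
  have map_midpoint : L (midpoint ℝ x y) = midpoint ℝ (L x) (L y) := L.toAffineMap.map_midpoint x y
  simpa only [map_midpoint] using hfgh (L x) (L y)

theorem prod [SFinite ν] (hμ : PrekopaLeindler μ) (hν : PrekopaLeindler ν) :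
    PrekopaLeindler (μ.prod ν) := by
  intro f g h hf hg hh hfgh
  rw [lintegral_prod _ hf.aemeasurable, lintegral_prod _ hg.aemeasurable,
    lintegral_prod _ hh.aemeasurable]
  refine hμ hf.lintegral_prod_right' hg.lintegral_prod_right' hh.lintegral_prod_right'
    fun x y => ?_
  exact hν (hf.comp measurable_prodMk_left) (hg.comp measurable_prodMk_left)
    (hh.comp measurable_prodMk_left) fun x' y' => hfgh (x, x') (y, y')

theorem restrict (hμ : PrekopaLeindler μ) {K : Set E} (hK : MeasurableSet K)
    (hK_convex : Convex ℝ K) : PrekopaLeindler (μ.restrict K) := by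
  intro f g h hf hg hh hfgh
  simp only [← lintegral_indicator hK]
  refine hμ (hf.indicator hK) (hg.indicator hK) (hh.indicator hK) fun x y => ?_
  by_cases hx : x ∈ K
  · by_cases hy : y ∈ K
    · simpa [hx, hy, hK_convex.midpoint_mem hx hy] using hfgh x y
    · simp [hy]
  · simp [hx]

end PrekopaLeindler

section AddHaar

variable {E F : Type*} [NormedAddCommGroup E] [NormedSpace ℝ E]
  [MeasurableSpace E] [BorelSpace E] [NormedAddCommGroup F] [NormedSpace ℝ F]
  [MeasurableSpace F] [BorelSpace F] [FiniteDimensional ℝ F]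

theorem PrekopaLeindler.of_continuousLinearEquiv {μ : Measure E} [μ.IsAddHaarMeasure]
    (hμ : PrekopaLeindler μ) (e : E ≃L[ℝ] F) (ν : Measure F) [ν.IsAddHaarMeasure] :
    PrekopaLeindler ν := by
  rw [Measure.isAddLeftInvariant_eq_smul ν (μ.map e)]
  exact (hμ.map e.toLinearMap e.continuous.measurable).const_smul _

theorem prekopaLeindler_volume_pi (n : ℕ) :
    PrekopaLeindler (volume : Measure (Fin n → ℝ)) := by
  induction n with
  | zero =>
    intro f g h _ _ _ hfgh
    simp only [lintegral_unique]
    rw [mul_mul_mul_comm, ← sq, mul_pow]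
    gcongr
    exact (hfgh _ _).trans_eq (by rw [midpoint_self])
  | succ n ih =>
    exact (prekopaLeindler_volume_real.prod ih).of_continuousLinearEquiv
      (ContinuousLinearEquiv.ofFinrankEq (by simp [add_comm])) volume

theorem prekopaLeindler_of_isAddHaarMeasure (μ : Measure F) [μ.IsAddHaarMeasure] :
    PrekopaLeindler μ :=
  (prekopaLeindler_volume_pi (Module.finrank ℝ F)).of_continuousLinearEquiv
    (ContinuousLinearEquiv.ofFinrankEq (by simp)) μ

end AddHaar

section Variance

variable {α : Type*} [MeasurableSpace α] {ν : Measure α} [IsFiniteMeasure ν] {u : α → ℝ}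

theorem integral_sub_const_sq_eq_integral_sub_average_sq_add (hu : MemLp u 2 ν) (m : ℝ) :
    ∫ x, (u x - m) ^ 2 ∂ν =
      ∫ x, (u x - ⨍ y, u y ∂ν) ^ 2 ∂ν + ν.real univ * (⨍ y, u y ∂ν - m) ^ 2 := by
  set a := ⨍ y, u y ∂ν
  have integrable_u : Integrable u ν := hu.integrable one_le_two
  have integral_sub_average : ∫ x, (u x - a) ∂ν = 0 := by
    rw [integral_sub integrable_u (integrable_const a), integral_average, sub_self]
  have integrable_sq : Integrable (fun x => (u x - a) ^ 2) ν :=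
    (hu.sub (memLp_const a)).integrable_sq
  calc ∫ x, (u x - m) ^ 2 ∂ν
      = ∫ x, ((u x - a) ^ 2 + 2 * (a - m) * (u x - a) + (a - m) ^ 2) ∂ν := by
        congr with x; ring
    _ = ∫ x, (u x - a) ^ 2 ∂ν + ν.real univ * (a - m) ^ 2 := by
        have integrable_linear : Integrable (fun x => 2 * (a - m) * (u x - a)) ν :=
          (integrable_u.sub (integrable_const a)).const_mul _
        rw [integral_add ?_ (integrable_const _), integral_add integrable_sq integrable_linear,
          integral_const_mul, integral_sub_average, integral_const, mul_zero, add_zero,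
          smul_eq_mul]
        exact integrable_sq.add integrable_linear

theorem integral_sub_average_sq_le_integral_sub_const_sq (hu : MemLp u 2 ν) (m : ℝ) :
    ∫ x, (u x - ⨍ y, u y ∂ν) ^ 2 ∂ν ≤ ∫ x, (u x - m) ^ 2 ∂ν := by
  rw [integral_sub_const_sq_eq_integral_sub_average_sq_add hu m]
  exact le_add_of_nonneg_right (by positivity)

theorem integrable_prod_sub_sq (hu : MemLp u 2 ν) :
    Integrable (fun z : α × α => (u z.1 - u z.2) ^ 2) (ν.prod ν) :=
  ((hu.comp_fst ν).sub (hu.comp_snd ν)).integrable_sq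

theorem integral_prod_sub_sq (hu : MemLp u 2 ν) :
    ∫ z : α × α, (u z.1 - u z.2) ^ 2 ∂ν.prod ν =
      2 * ν.real univ * ∫ x, (u x - ⨍ y, u y ∂ν) ^ 2 ∂ν := by
  have integrable_sub_sq : Integrable (fun x => (u x - ⨍ y, u y ∂ν) ^ 2) ν :=
    (hu.sub (memLp_const _)).integrable_sq
  calc ∫ z : α × α, (u z.1 - u z.2) ^ 2 ∂ν.prod ν
      = ∫ y, ∫ x, (u x - u y) ^ 2 ∂ν ∂ν := integral_prod_symm _ (integrable_prod_sub_sq hu)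
    _ = ∫ y, (∫ x, (u x - ⨍ y, u y ∂ν) ^ 2 ∂ν +
          ν.real univ * (u y - ⨍ y, u y ∂ν) ^ 2) ∂ν := by
        congr with y
        rw [integral_sub_const_sq_eq_integral_sub_average_sq_add hu, ← neg_sub, neg_sq]
    _ = 2 * ν.real univ * ∫ x, (u x - ⨍ y, u y ∂ν) ^ 2 ∂ν := by
        rw [integral_add (integrable_const _) (integrable_sub_sq.const_mul _), integral_const,
          integral_const_mul, smul_eq_mul]
        ring

end Variance

theorem one_add_sq_div_two_le_cosh (x : ℝ) : 1 + x ^ 2 / 2 ≤ Real.cosh x := by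
  have abs_le_sinh : |x / 2| ≤ |Real.sinh (x / 2)| :=
    (Real.self_le_sinh_iff.2 (abs_nonneg _)).trans_eq (Real.abs_sinh _).symm
  calc 1 + x ^ 2 / 2 = 1 + 2 * (x / 2) ^ 2 := by ring
    _ ≤ 1 + 2 * Real.sinh (x / 2) ^ 2 := by grw [sq_le_sq.2 abs_le_sinh]
    _ = Real.cosh x := by
      rw [show Real.cosh x = Real.cosh (2 * (x / 2)) by ring_nf, Real.cosh_two_mul, Real.cosh_sq]
      ring

theorem exists_sub_le_norm_fderiv_mul_add_sq {E : Type*} [NormedAddCommGroup E]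
    [NormedSpace ℝ E] {K : Set E} (hK : IsCompact K) (hK_convex : Convex ℝ K) {u : E → ℝ}
    (hu : ContDiff ℝ 1 u) {δ : ℝ} (hδ : 0 < δ) :
    ∃ M : ℝ, ∀ x ∈ K, ∀ y ∈ K,
      u x - u y ≤ (‖fderiv ℝ u x‖ + δ) * ‖x - y‖ + M * ‖x - y‖ ^ 2 := by
  obtain ⟨η, hη, fderiv_close⟩ := Metric.uniformContinuousOn_iff.1
    (hK.uniformContinuousOn_of_continuous (hu.continuous_fderiv one_ne_zero).continuousOn) δ hδ
  obtain ⟨C, hC⟩ := hK.exists_bound_of_continuousOn hu.continuous.continuousOn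
  refine ⟨2 * |C| / η ^ 2, fun x hx y hy => ?_⟩
  rcases lt_or_ge (dist y x) η with hxy | hxy
  · have taylor : ‖u y - u x - fderiv ℝ u x (y - x)‖ ≤ δ * ‖y - x‖ :=
      Convex.norm_image_sub_le_of_norm_fderiv_le' (s := K ∩ Metric.ball x η)
        (fun _ _ => hu.differentiable one_ne_zero _)
        (fun z hz => by
          rw [← dist_eq_norm]; exact (fderiv_close z hz.1 x hx hz.2).le)
        (hK_convex.inter (convex_ball x η)) ⟨hx, Metric.mem_ball_self hη⟩ ⟨hy, hxy⟩
    have linear := (fderiv ℝ u x).le_opNorm (y - x)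
    rw [Real.norm_eq_abs] at taylor linear
    rw [norm_sub_rev x y, add_mul]
    have : 0 ≤ 2 * |C| / η ^ 2 * ‖y - x‖ ^ 2 := by positivity
    linarith [neg_le_of_abs_le taylor, neg_le_of_abs_le linear]
  · have far : η ^ 2 ≤ ‖x - y‖ ^ 2 := by
      rw [dist_comm, dist_eq_norm] at hxy
      gcongr
    calc u x - u y ≤ ‖u x‖ + ‖u y‖ := (Real.le_norm_self _).trans (norm_sub_le _ _)
      _ ≤ 2 * |C| := by linarith [hC x hx, hC y hy, le_abs_self C]
      _ = 2 * |C| / η ^ 2 * η ^ 2 := by field_simp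
      _ ≤ (‖fderiv ℝ u x‖ + δ) * ‖x - y‖ + 2 * |C| / η ^ 2 * ‖x - y‖ ^ 2 :=
          le_add_of_nonneg_of_le (by positivity) (by gcongr)

section PropertyTau

variable {E : Type*} [NormedAddCommGroup E] [MeasurableSpace E] {κ : ℝ}

/-- Maurey's property (τ) of `ν` for the cost `κ * ‖x - y‖ ^ 2`, in exponential form and with the
infimal convolution replaced by an arbitrary pair of functions admissible for the cost. The measure
need not be normalised. -/
def HasPropertyTau (κ : ℝ) (ν : Measure E) : Prop :=
  ∀ ⦃f g : E → ℝ≥0∞⦄, Measurable f → Measurable g →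
    (∀ x y, f x * g y ≤ ENNReal.ofReal (Real.exp (κ * ‖x - y‖ ^ 2))) →
      (∫⁻ x, f x ∂ν) * ∫⁻ x, g x ∂ν ≤ ν univ ^ 2

theorem PrekopaLeindler.hasPropertyTau_withDensity [NormedSpace ℝ E] {μ : Measure E}
    (hμ : PrekopaLeindler μ) {w : E → ℝ≥0∞} (hw : Measurable w)
    (hw_concave : ∀ x y, w x * w y * ENNReal.ofReal (Real.exp (κ * ‖x - y‖ ^ 2)) ≤
      w (midpoint ℝ x y) ^ 2) : HasPropertyTau κ (μ.withDensity w) := by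
  intro f g hf hg hfg
  rw [lintegral_withDensity_eq_lintegral_mul μ hw hf,
    lintegral_withDensity_eq_lintegral_mul μ hw hg, withDensity_apply w .univ,
    Measure.restrict_univ]
  refine hμ (hw.mul hf) (hw.mul hg) hw fun x y => ?_
  calc w x * f x * (w y * g y) = w x * w y * (f x * g y) := mul_mul_mul_comm ..
    _ ≤ w x * w y * ENNReal.ofReal (Real.exp (κ * ‖x - y‖ ^ 2)) := by grw [hfg x y]
    _ ≤ w (midpoint ℝ x y) ^ 2 := hw_concave x y

theorem ae_prod_mem {α β : Type*} [MeasurableSpace α] [MeasurableSpace β] {μ : Measure α}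
    {ν : Measure β} {s : Set α} {t : Set β} (hs : ∀ᵐ x ∂μ, x ∈ s)
    (ht : ∀ᵐ y ∂ν, y ∈ t) : ∀ᵐ z ∂μ.prod ν, z ∈ s ×ˢ t :=
  (Measure.quasiMeasurePreserving_fst.ae hs).and (Measure.quasiMeasurePreserving_snd.ae ht)

theorem integrable_of_continuous_of_ae_mem {X : Type*} [TopologicalSpace X] [T2Space X]
    [MeasurableSpace X] [OpensMeasurableSpace X] {μ : Measure X} [IsFiniteMeasureOnCompacts μ]
    {K : Set X} (hK : IsCompact K) (hμK : ∀ᵐ x ∂μ, x ∈ K) {f : X → ℝ} (hf : Continuous f) :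
    Integrable f μ := by
  rw [← Measure.restrict_eq_self_of_ae_mem hμK]
  exact hf.continuousOn.integrableOn_compact hK

theorem memLp_two_of_continuous_of_ae_mem {X : Type*} [TopologicalSpace X] [T2Space X]
    [MeasurableSpace X] [OpensMeasurableSpace X] {μ : Measure X} [IsFiniteMeasureOnCompacts μ]
    {K : Set X} (hK : IsCompact K) (hμK : ∀ᵐ x ∂μ, x ∈ K) {f : X → ℝ} (hf : Continuous f) :
    MemLp f 2 μ :=
  (memLp_two_iff_integrable_sq hf.aestronglyMeasurable).2
    (integrable_of_continuous_of_ae_mem hK hμK (hf.pow 2))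

theorem integral_exp_sub_prod_eq_integral_cosh {α : Type*} [MeasurableSpace α] {ν : Measure α}
    [SFinite ν] {f : α → ℝ}
    (hf : Integrable (fun z : α × α => Real.exp (f z.1 - f z.2)) (ν.prod ν)) :
    ∫ z : α × α, Real.exp (f z.1 - f z.2) ∂ν.prod ν =
      ∫ z : α × α, Real.cosh (f z.1 - f z.2) ∂ν.prod ν := by
  have swap : ∫ z : α × α, Real.exp (-(f z.1 - f z.2)) ∂ν.prod ν =
      ∫ z : α × α, Real.exp (f z.1 - f z.2) ∂ν.prod ν := by
    simpa only [neg_sub, Prod.fst_swap, Prod.snd_swap] using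
      integral_prod_swap (μ := ν) (ν := ν) fun z : α × α => Real.exp (f z.1 - f z.2)
  have integrable_neg : Integrable (fun z : α × α => Real.exp (-(f z.1 - f z.2))) (ν.prod ν) := by
    simpa only [neg_sub, Function.comp_def, Prod.fst_swap, Prod.snd_swap] using hf.swap
  simp only [Real.cosh_eq]
  rw [integral_div, integral_add hf integrable_neg, swap, add_self_div_two]

theorem mul_le_mul_sq_add_sq_div {a : ℝ} (ha : 0 < a) (p r : ℝ) :
    p * r ≤ a * r ^ 2 + p ^ 2 / (4 * a) := by
  have completed_square : a * r ^ 2 + p ^ 2 / (4 * a) - p * r = (2 * a * r - p) ^ 2 / (4 * a) := by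
    field_simp
    ring
  exact sub_nonneg.1 (completed_square ▸ by positivity)

namespace HasPropertyTau

variable [BorelSpace E] [SecondCountableTopology E] {ν : Measure E} [IsFiniteMeasure ν]
  {K : Set E} {f g b : E → ℝ}

theorem integral_exp_sub_le (hν : HasPropertyTau κ ν) (hK : IsCompact K) (hνK : ∀ᵐ x ∂ν, x ∈ K)
    (hf : Continuous f) (hg : Continuous g)
    (hfg : ∀ x ∈ K, ∀ y ∈ K, f x - g y ≤ κ * ‖x - y‖ ^ 2) :
    ∫ z : E × E, Real.exp (f z.1 - g z.2) ∂ν.prod ν ≤ ν.real univ ^ 2 := by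
  have measurable_exp {k : E → ℝ} (hk : Continuous k) :
      Measurable fun x => ENNReal.ofReal (Real.exp (k x)) := by fun_prop
  have ofReal_integral_exp {k : E → ℝ} (hk : Continuous k) :
      ENNReal.ofReal (∫ x, Real.exp (k x) ∂ν) =
        ∫⁻ x, K.indicator (fun x => ENNReal.ofReal (Real.exp (k x))) x ∂ν := by
    rw [ofReal_integral_eq_lintegral_ofReal
      (integrable_of_continuous_of_ae_mem hK hνK hk.rexp)
      (.of_forall fun x => (Real.exp_pos _).le)]
    refine lintegral_congr_ae (hνK.mono fun x hx => ?_)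
    dsimp only
    rw [indicator_of_mem hx]
  simp only [sub_eq_add_neg, Real.exp_add]
  rw [integral_prod_mul (fun x => Real.exp (f x)) fun y => Real.exp (-g y), measureReal_def,
    ← ENNReal.toReal_pow, ← ENNReal.ofReal_le_iff_le_toReal (by finiteness),
    ENNReal.ofReal_mul (by positivity), ofReal_integral_exp hf, ofReal_integral_exp hg.fun_neg]
  refine hν ((measurable_exp hf).indicator hK.measurableSet)
    ((measurable_exp hg.fun_neg).indicator hK.measurableSet) fun x y => ?_
  by_cases hx : x ∈ K
  · by_cases hy : y ∈ K
    · rw [indicator_of_mem hx, indicator_of_mem hy, ← ENNReal.ofReal_mul (by positivity),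
        ← Real.exp_add, ← sub_eq_add_neg]
      gcongr
      exact hfg x hx y hy
    · simp [hy]
  · simp [hx]

theorem integral_exp_sub_self_le (hν : HasPropertyTau κ ν) (hK : IsCompact K)
    (hνK : ∀ᵐ x ∂ν, x ∈ K) (hf : Continuous f) (hb : Continuous b) (hb_nonneg : ∀ x, 0 ≤ b x)
    (hfb : ∀ x ∈ K, ∀ y ∈ K, f x - f y ≤ κ * ‖x - y‖ ^ 2 + b x) {c : ℝ}
    (hc : ∀ x ∈ K, ∀ y ∈ K, f x - f y ≤ c) :
    ∫ z : E × E, Real.exp (f z.1 - f z.2) ∂ν.prod ν ≤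
      ν.real univ ^ 2 + Real.exp c * (ν.real univ * ∫ x, b x ∂ν) := by
  have ae_mem := ae_prod_mem hνK hνK
  have integrable {k : E × E → ℝ} (hk : Continuous k) : Integrable k (ν.prod ν) :=
    integrable_of_continuous_of_ae_mem (hK.prod hK) ae_mem hk
  have exp_le (v : ℝ) (x : E) (hv : v ≤ c) :
      Real.exp v ≤ Real.exp (v - b x) + Real.exp c * b x := by
    have := Real.exp_pos v
    calc Real.exp v = Real.exp v * (1 - b x) + Real.exp v * b x := by ring
      _ ≤ Real.exp v * Real.exp (-b x) + Real.exp c * b x := by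
        gcongr
        · exact Real.one_sub_le_exp_neg _
        · exact hb_nonneg x
      _ = Real.exp (v - b x) + Real.exp c * b x := by rw [sub_eq_add_neg, Real.exp_add]
  calc ∫ z : E × E, Real.exp (f z.1 - f z.2) ∂ν.prod ν
      ≤ ∫ z : E × E, (Real.exp (f z.1 - b z.1 - f z.2) + Real.exp c * b z.1) ∂ν.prod ν := by
        refine integral_mono_ae (integrable (by fun_prop)) (integrable (by fun_prop)) ?_
        filter_upwards [ae_mem] with z hz
        rw [sub_right_comm]
        exact exp_le _ _ (hc _ hz.1 _ hz.2)
    _ = ∫ z : E × E, Real.exp (f z.1 - b z.1 - f z.2) ∂ν.prod ν +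
          Real.exp c * (ν.real univ * ∫ x, b x ∂ν) := by
        rw [integral_add (integrable (by fun_prop)) (integrable (by fun_prop)),
          integral_const_mul, integral_fun_fst, smul_eq_mul]
    _ ≤ ν.real univ ^ 2 + Real.exp c * (ν.real univ * ∫ x, b x ∂ν) := by
        gcongr
        exact hν.integral_exp_sub_le hK hνK (hf.fun_sub hb) hf fun x hx y hy => by
          linarith [hfb x hx y hy]

theorem integral_sub_sq_le (hν : HasPropertyTau κ ν) (hK : IsCompact K)
    (hνK : ∀ᵐ x ∂ν, x ∈ K) (hf : Continuous f) (hb : Continuous b) (hb_nonneg : ∀ x, 0 ≤ b x)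
    (hfb : ∀ x ∈ K, ∀ y ∈ K, f x - f y ≤ κ * ‖x - y‖ ^ 2 + b x) {c : ℝ}
    (hc : ∀ x ∈ K, ∀ y ∈ K, f x - f y ≤ c) :
    ∫ z : E × E, (f z.1 - f z.2) ^ 2 ∂ν.prod ν ≤
      2 * Real.exp c * ν.real univ * ∫ x, b x ∂ν := by
  have integrable {k : E × E → ℝ} (hk : Continuous k) : Integrable k (ν.prod ν) :=
    integrable_of_continuous_of_ae_mem (hK.prod hK) (ae_prod_mem hνK hνK) hk
  have quadratic_le_exp : ν.real univ ^ 2 + (∫ z : E × E, (f z.1 - f z.2) ^ 2 ∂ν.prod ν) / 2 ≤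
      ∫ z : E × E, Real.exp (f z.1 - f z.2) ∂ν.prod ν := by
    calc ν.real univ ^ 2 + (∫ z : E × E, (f z.1 - f z.2) ^ 2 ∂ν.prod ν) / 2
        = ∫ z : E × E, (1 + (f z.1 - f z.2) ^ 2 / 2) ∂ν.prod ν := by
          rw [integral_add (integrable_const 1) (integrable (by fun_prop)), integral_div,
            integral_const, smul_eq_mul, mul_one, ← univ_prod_univ, measureReal_prod_prod, sq]
      _ ≤ ∫ z : E × E, Real.cosh (f z.1 - f z.2) ∂ν.prod ν :=
          integral_mono (integrable (by fun_prop)) (integrable (by fun_prop)) fun _ =>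
            one_add_sq_div_two_le_cosh _
      _ = ∫ z : E × E, Real.exp (f z.1 - f z.2) ∂ν.prod ν :=
          (integral_exp_sub_prod_eq_integral_cosh (integrable (by fun_prop))).symm
  linarith [hν.integral_exp_sub_self_le hK hνK hf hb hb_nonneg hfb hc]

variable [NormedSpace ℝ E] {u : E → ℝ}

-- Property (τ) is applied to `ε * u`; to second order in `ε` it is a Poincaré inequality.
theorem integral_prod_sub_sq_le_of_sub_le (hν : HasPropertyTau κ ν)
    (hK : IsCompact K) (hνK : ∀ᵐ x ∂ν, x ∈ K) (hu : ContDiff ℝ 1 u) {δ M C ε : ℝ}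
    (hδ : 0 ≤ δ) (hM : ∀ x ∈ K, ∀ y ∈ K,
      u x - u y ≤ (‖fderiv ℝ u x‖ + δ) * ‖x - y‖ + M * ‖x - y‖ ^ 2)
    (hC : ∀ x ∈ K, ∀ y ∈ K, u x - u y ≤ C) (hε : 0 < ε) (hεM : 0 < κ - δ - ε * M) :
    ∫ z : E × E, (u z.1 - u z.2) ^ 2 ∂ν.prod ν ≤ 2 * Real.exp (ε * C) * ν.real univ *
      ((∫ x, ‖fderiv ℝ u x‖ ^ 2 ∂ν) / (4 * (κ - δ - ε * M)) + δ / 4 * ν.real univ) := by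
  have continuous_grad_sq : Continuous fun x => ‖fderiv ℝ u x‖ ^ 2 :=
    (hu.continuous_fderiv one_ne_zero).norm.pow 2
  have scaled_sub_le (x) (hx : x ∈ K) (y) (hy : y ∈ K) :
      ε * u x - ε * u y ≤ κ * ‖x - y‖ ^ 2 +
        ε ^ 2 * (‖fderiv ℝ u x‖ ^ 2 / (4 * (κ - δ - ε * M)) + δ / 4) := by
    calc ε * u x - ε * u y = ε * (u x - u y) := by ring
      _ ≤ ε * ((‖fderiv ℝ u x‖ + δ) * ‖x - y‖ + M * ‖x - y‖ ^ 2) := by grw [hM x hx y hy]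
      _ = ε * ‖fderiv ℝ u x‖ * ‖x - y‖ + δ * (ε * ‖x - y‖) + ε * M * ‖x - y‖ ^ 2 := by ring
      _ ≤ ((κ - δ - ε * M) * ‖x - y‖ ^ 2 + (ε * ‖fderiv ℝ u x‖) ^ 2 / (4 * (κ - δ - ε * M))) +
            δ * (1 * ‖x - y‖ ^ 2 + ε ^ 2 / (4 * 1)) + ε * M * ‖x - y‖ ^ 2 := by
        gcongr
        · exact mul_le_mul_sq_add_sq_div hεM _ _
        · exact mul_le_mul_sq_add_sq_div one_pos _ _
      _ = κ * ‖x - y‖ ^ 2 +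
            ε ^ 2 * (‖fderiv ℝ u x‖ ^ 2 / (4 * (κ - δ - ε * M)) + δ / 4) := by ring
  have scaled := hν.integral_sub_sq_le hK hνK (hu.continuous.const_mul ε)
    (((continuous_grad_sq.div_const _).add_const _).const_mul _)
    (fun x => by positivity) scaled_sub_le (c := ε * C)
    fun x hx y hy => by grw [← mul_sub, hC x hx y hy]
  simp only [← mul_sub, mul_pow, integral_const_mul] at scaled
  rw [integral_add ((integrable_of_continuous_of_ae_mem hK hνK continuous_grad_sq).div_const _)
    (integrable_const _), integral_div, integral_const, smul_eq_mul] at scaled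
  refine le_of_mul_le_mul_left (scaled.trans_eq ?_) (pow_pos hε 2)
  ring

theorem integral_prod_sub_sq_le_of_lt (hν : HasPropertyTau κ ν) (hK : IsCompact K)
    (hK_convex : Convex ℝ K) (hνK : ∀ᵐ x ∂ν, x ∈ K) (hu : ContDiff ℝ 1 u) {δ : ℝ} (hδ : 0 < δ)
    (hδκ : δ < κ) :
    ∫ z : E × E, (u z.1 - u z.2) ^ 2 ∂ν.prod ν ≤ 2 * ν.real univ *
      ((∫ x, ‖fderiv ℝ u x‖ ^ 2 ∂ν) / (4 * (κ - δ)) + δ / 4 * ν.real univ) := by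
  obtain ⟨C, hC⟩ := hK.exists_bound_of_continuousOn hu.continuous.continuousOn
  have sub_le (x) (hx : x ∈ K) (y) (hy : y ∈ K) : u x - u y ≤ C + C :=
    ((Real.le_norm_self _).trans (norm_sub_le _ _)).trans (add_le_add (hC x hx) (hC y hy))
  obtain ⟨M, hM⟩ := exists_sub_le_norm_fderiv_mul_add_sq hK hK_convex hu hδ
  have tendsto_coeff : Tendsto (fun ε : ℝ => κ - δ - ε * M) (𝓝[>] 0) (𝓝 (κ - δ)) :=
    tendsto_nhdsWithin_of_tendsto_nhds (Continuous.tendsto' (by fun_prop) _ _ (by simp))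
  have tendsto_exp : Tendsto (fun ε : ℝ => Real.exp (ε * (C + C))) (𝓝[>] 0) (𝓝 1) :=
    tendsto_nhdsWithin_of_tendsto_nhds (Continuous.tendsto' (by fun_prop) _ _ (by simp))
  have tendsto_bound := ((tendsto_exp.const_mul 2).mul_const (ν.real univ)).mul
    ((tendsto_const_nhds (x := ∫ x, ‖fderiv ℝ u x‖ ^ 2 ∂ν)).div (tendsto_coeff.const_mul 4)
      (by linarith) |>.add_const (δ / 4 * ν.real univ))
  rw [mul_one] at tendsto_bound
  refine ge_of_tendsto tendsto_bound ?_
  filter_upwards [self_mem_nhdsWithin, tendsto_coeff.eventually_const_lt (sub_pos.2 hδκ)]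
    with ε hε hεM
  exact hν.integral_prod_sub_sq_le_of_sub_le hK hνK hu hδ.le hM sub_le hε hεM

theorem integral_prod_sub_sq_le (hν : HasPropertyTau κ ν) (hκ : 0 < κ) (hK : IsCompact K)
    (hK_convex : Convex ℝ K) (hνK : ∀ᵐ x ∂ν, x ∈ K) (hu : ContDiff ℝ 1 u) :
    ∫ z : E × E, (u z.1 - u z.2) ^ 2 ∂ν.prod ν ≤
      2 * ν.real univ * ((∫ x, ‖fderiv ℝ u x‖ ^ 2 ∂ν) / (4 * κ)) := by
  have tendsto_coeff : Tendsto (fun δ : ℝ => κ - δ) (𝓝[>] 0) (𝓝 κ) :=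
    tendsto_nhdsWithin_of_tendsto_nhds (Continuous.tendsto' (by fun_prop) _ _ (by simp))
  have tendsto_error : Tendsto (fun δ : ℝ => δ / 4 * ν.real univ) (𝓝[>] 0) (𝓝 0) :=
    tendsto_nhdsWithin_of_tendsto_nhds (Continuous.tendsto' (by fun_prop) _ _ (by simp))
  have tendsto_bound :=
    ((tendsto_const_nhds (x := ∫ x, ‖fderiv ℝ u x‖ ^ 2 ∂ν)).div (tendsto_coeff.const_mul 4)
      (by positivity) |>.add tendsto_error).const_mul (2 * ν.real univ)
  rw [add_zero] at tendsto_bound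
  refine ge_of_tendsto tendsto_bound ?_
  filter_upwards [self_mem_nhdsWithin, nhdsWithin_le_nhds (gt_mem_nhds hκ)] with δ hδ hδκ
  exact hν.integral_prod_sub_sq_le_of_lt hK hK_convex hνK hu hδ hδκ

theorem integral_sub_average_sq_le (hν : HasPropertyTau κ ν) (hκ : 0 < κ)
    (hK : IsCompact K) (hK_convex : Convex ℝ K) (hνK : ∀ᵐ x ∂ν, x ∈ K) (hu : ContDiff ℝ 1 u) :
    ∫ x, (u x - ⨍ y, u y ∂ν) ^ 2 ∂ν ≤ (∫ x, ‖fderiv ℝ u x‖ ^ 2 ∂ν) / (4 * κ) := by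
  rcases eq_zero_or_neZero ν with rfl | _
  · simp
  have pairs := hν.integral_prod_sub_sq_le hκ hK hK_convex hνK hu
  rw [integral_prod_sub_sq (memLp_two_of_continuous_of_ae_mem hK hνK hu.continuous)] at pairs
  exact le_of_mul_le_mul_left pairs (mul_pos two_pos measureReal_univ_pos)

end HasPropertyTau

end PropertyTau

section Convex

theorem integral_sub_average_sq_le_mul {α : Type*} [MeasurableSpace α] {ν ρ : Measure α}
    [IsFiniteMeasure ν] {L : ℝ≥0} (hρν : ρ ≤ L • ν) {u : α → ℝ} (hu : MemLp u 2 ν) :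
    ∫ x, (u x - ⨍ y, u y ∂ρ) ^ 2 ∂ρ ≤ L * ∫ x, (u x - ⨍ y, u y ∂ν) ^ 2 ∂ν := by
  have : IsFiniteMeasure ρ := isFiniteMeasure_of_le _ hρν
  have memLp_smul : MemLp u 2 (L • ν) := hu.smul_measure ENNReal.coe_ne_top
  calc ∫ x, (u x - ⨍ y, u y ∂ρ) ^ 2 ∂ρ ≤ ∫ x, (u x - ⨍ y, u y ∂ν) ^ 2 ∂ρ :=
        integral_sub_average_sq_le_integral_sub_const_sq (memLp_smul.mono_measure hρν) _
    _ ≤ ∫ x, (u x - ⨍ y, u y ∂ν) ^ 2 ∂(L • ν) :=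
        integral_mono_measure hρν (.of_forall fun x => sq_nonneg _)
          (memLp_smul.sub (memLp_const _)).integrable_sq
    _ = L * ∫ x, (u x - ⨍ y, u y ∂ν) ^ 2 ∂ν := integral_smul_nnreal_measure _ _

variable {E : Type*} [NormedAddCommGroup E] [MeasurableSpace E] {μ : Measure E}

/-- The measure `μ` reweighted by a Gaussian centred at `c`. The exponent is normalised so that
tilting a Prékopa–Leindler measure on a Hilbert space by `κ` yields property (τ) with constant
`κ`. -/
noncomputable def gaussianTilt (κ : ℝ) (c : E) (μ : Measure E) : Measure E :=
  μ.withDensity fun x => ENNReal.ofReal (Real.exp (-(2 * κ * ‖x - c‖ ^ 2)))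

theorem gaussianTilt_le {κ : ℝ} (hκ : 0 ≤ κ) (c : E) : gaussianTilt κ c μ ≤ μ := by
  refine (withDensity_mono (.of_forall fun x => ?_)).trans_eq withDensity_one
  exact ENNReal.ofReal_le_one.2 (Real.exp_le_one_iff.2 (neg_nonpos.2 (by positivity)))

theorem le_smul_gaussianTilt [BorelSpace E] {κ : ℝ} (hκ : 0 ≤ κ) {c : E} {D : ℝ}
    (hμD : ∀ᵐ x ∂μ, ‖x - c‖ ≤ D) :
    μ ≤ (Real.exp (2 * κ * D ^ 2)).toNNReal • gaussianTilt κ c μ := by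
  rw [gaussianTilt, ← Measure.coe_nnreal_smul, ← ENNReal.ofReal,
    ← withDensity_smul _ (by fun_prop)]
  refine withDensity_one.symm.trans_le (withDensity_mono ?_)
  filter_upwards [hμD] with x hx
  rw [Pi.smul_apply, smul_eq_mul, ← ENNReal.ofReal_mul (by positivity), ← Real.exp_add,
    Pi.one_apply, ENNReal.one_le_ofReal, Real.one_le_exp_iff, ← sub_eq_add_neg, sub_nonneg]
  gcongr

theorem PrekopaLeindler.hasPropertyTau_gaussianTilt [InnerProductSpace ℝ E]
    [BorelSpace E] (hμ : PrekopaLeindler μ) (κ : ℝ) (c : E) :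
    HasPropertyTau κ (gaussianTilt κ c μ) := by
  refine hμ.hasPropertyTau_withDensity (by fun_prop) fun x y => le_of_eq ?_
  have parallelogram : ‖x - c‖ ^ 2 + ‖y - c‖ ^ 2 =
      2 * ‖midpoint ℝ x y - c‖ ^ 2 + ‖x - y‖ ^ 2 / 2 := by
    have := EuclideanGeometry.dist_sq_add_dist_sq_eq_two_mul_dist_midpoint_sq_add_half_dist_sq c x y
    simp only [dist_comm c, dist_eq_norm] at this
    linarith
  rw [← ENNReal.ofReal_mul (by positivity), ← Real.exp_add, ← ENNReal.ofReal_mul (by positivity),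
    ← Real.exp_add, ← ENNReal.ofReal_pow (by positivity), ← Real.exp_nat_mul]
  congr 2
  push_cast
  linear_combination (-2 * κ) * parallelogram

variable [InnerProductSpace ℝ E] [BorelSpace E] [SecondCountableTopology E]
  [IsFiniteMeasureOnCompacts μ] {K : Set E} {u : E → ℝ}

theorem setIntegral_sub_setAverage_sq_le_of_norm_sub_le (hμ : PrekopaLeindler μ)
    (hK : IsCompact K) (hK_convex : Convex ℝ K) {c : E} {D : ℝ} (hD : 0 < D)
    (hKD : ∀ x ∈ K, ‖x - c‖ ≤ D) (hu : ContDiff ℝ 1 u) :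
    ∫ x in K, (u x - ⨍ y in K, u y ∂μ) ^ 2 ∂μ ≤
      Real.exp 1 / 2 * D ^ 2 * ∫ x in K, ‖fderiv ℝ u x‖ ^ 2 ∂μ := by
  have continuous_grad_sq : Continuous fun x => ‖fderiv ℝ u x‖ ^ 2 :=
    (hu.continuous_fderiv one_ne_zero).norm.pow 2
  have : Fact (μ K < ∞) := ⟨hK.measure_lt_top⟩
  -- This `κ` minimises the resulting constant `exp (2 * κ * D ^ 2) / (4 * κ)`.
  set κ : ℝ := 1 / (2 * D ^ 2) with hκ_def
  have hκ : 0 < κ := by positivity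
  set ν := gaussianTilt κ c (μ.restrict K)
  have ν_le : ν ≤ μ.restrict K := gaussianTilt_le hκ.le c
  have : IsFiniteMeasure ν := isFiniteMeasure_of_le _ ν_le
  have ae_mem : ∀ᵐ x ∂μ.restrict K, x ∈ K := ae_restrict_mem hK.measurableSet
  have ae_mem_ν : ∀ᵐ x ∂ν, x ∈ K := ae_mono ν_le ae_mem
  have le_ν : μ.restrict K ≤ (Real.exp 1).toNNReal • ν := by
    have exponent : 2 * κ * D ^ 2 = 1 := by rw [hκ_def]; field_simp
    simpa only [exponent] using le_smul_gaussianTilt hκ.le (ae_mem.mono hKD)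
  have poincare_ν : ∫ x, (u x - ⨍ y, u y ∂ν) ^ 2 ∂ν ≤ (∫ x, ‖fderiv ℝ u x‖ ^ 2 ∂ν) / (4 * κ) :=
    ((hμ.restrict hK.measurableSet hK_convex).hasPropertyTau_gaussianTilt κ c
      ).integral_sub_average_sq_le hκ hK hK_convex ae_mem_ν hu
  calc ∫ x in K, (u x - ⨍ y in K, u y ∂μ) ^ 2 ∂μ
    _ ≤ (Real.exp 1).toNNReal * ∫ x, (u x - ⨍ y, u y ∂ν) ^ 2 ∂ν :=
      integral_sub_average_sq_le_mul le_ν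
        (memLp_two_of_continuous_of_ae_mem hK ae_mem_ν hu.continuous)
    _ ≤ Real.exp 1 * ((∫ x in K, ‖fderiv ℝ u x‖ ^ 2 ∂μ) / (4 * κ)) := by
      rw [Real.coe_toNNReal _ (Real.exp_nonneg 1)]
      grw [poincare_ν, integral_mono_measure ν_le (.of_forall fun x => by positivity)
        (integrable_of_continuous_of_ae_mem hK ae_mem continuous_grad_sq)]
    _ = Real.exp 1 / 2 * D ^ 2 * ∫ x in K, ‖fderiv ℝ u x‖ ^ 2 ∂μ := by
      rw [hκ_def]
      field_simp
      ring

theorem setIntegral_sub_setAverage_sq_le (hμ : PrekopaLeindler μ) (hK : IsCompact K)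
    (hK_convex : Convex ℝ K) (hu : ContDiff ℝ 1 u) :
    ∫ x in K, (u x - ⨍ y in K, u y ∂μ) ^ 2 ∂μ ≤
      Real.exp 1 / 2 * Metric.diam K ^ 2 * ∫ x in K, ‖fderiv ℝ u x‖ ^ 2 ∂μ := by
  obtain rfl | ⟨c, hc⟩ := K.eq_empty_or_nonempty
  · simp
  have bound : Continuous fun D : ℝ =>
      Real.exp 1 / 2 * D ^ 2 * ∫ x in K, ‖fderiv ℝ u x‖ ^ 2 ∂μ := by fun_prop
  refine ge_of_tendsto (x := 𝓝[>] Metric.diam K) (bound.continuousWithinAt (s := Ioi _)) ?_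
  filter_upwards [self_mem_nhdsWithin] with D hD
  refine setIntegral_sub_setAverage_sq_le_of_norm_sub_le hμ hK hK_convex (c := c)
    (Metric.diam_nonneg.trans_lt hD) (fun x hx => ?_) hu
  exact (dist_eq_norm x c).symm.trans_le
    ((Metric.dist_le_diam_of_mem hK.isBounded hx hc).trans (mem_Ioi.1 hD).le)

theorem setLIntegral_prod_sub_sq_le [SFinite μ] (hμ : PrekopaLeindler μ) (hK : IsCompact K)
    (hK_convex : Convex ℝ K) (hu : ContDiff ℝ 1 u) :
    ∫⁻ z in K ×ˢ K, ENNReal.ofReal ((u z.1 - u z.2) ^ 2) ∂μ.prod μ ≤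
      ENNReal.ofReal (Real.exp 1 * Metric.diam K ^ 2 * μ.real K) *
        ∫⁻ x in K, ENNReal.ofReal (‖fderiv ℝ u x‖ ^ 2) ∂μ := by
  have continuous_grad_sq : Continuous fun x => ‖fderiv ℝ u x‖ ^ 2 :=
    (hu.continuous_fderiv one_ne_zero).norm.pow 2
  have : Fact (μ K < ∞) := ⟨hK.measure_lt_top⟩
  have ae_mem : ∀ᵐ x ∂μ.restrict K, x ∈ K := ae_restrict_mem hK.measurableSet
  have u_memLp := memLp_two_of_continuous_of_ae_mem hK ae_mem hu.continuous
  rw [← Measure.prod_restrict, ← ofReal_integral_eq_lintegral_ofReal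
      (integrable_prod_sub_sq u_memLp) (.of_forall fun z => sq_nonneg _),
    ← ofReal_integral_eq_lintegral_ofReal
      (integrable_of_continuous_of_ae_mem hK ae_mem continuous_grad_sq)
      (.of_forall fun x => sq_nonneg _),
    ← ENNReal.ofReal_mul (by positivity)]
  refine ENNReal.ofReal_le_ofReal ?_
  rw [integral_prod_sub_sq u_memLp, measureReal_restrict_apply_univ]
  grw [setIntegral_sub_setAverage_sq_le hμ hK hK_convex hu]
  apply le_of_eq
  ring

end Convex

section LayerCake

variable {α : Type*} [MeasurableSpace α] {μ : Measure α}

theorem lintegral_mul_ofReal_eq_lintegral_setLIntegral {F : α → ℝ≥0∞} (hF : Measurable F)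
    {φ : α → ℝ} (hφ : Measurable φ) (hφ0 : ∀ x, 0 ≤ φ x) :
    ∫⁻ x, F x * ENNReal.ofReal (φ x) ∂μ = ∫⁻ a in Ioi 0, ∫⁻ x in {x | a ≤ φ x}, F x ∂μ := by
  have layer_cake := lintegral_eq_lintegral_meas_le (μ.withDensity F) (.of_forall hφ0)
    hφ.aemeasurable
  rw [lintegral_withDensity_eq_lintegral_mul _ hF hφ.ennreal_ofReal] at layer_cake
  simpa only [Pi.mul_apply, withDensity_apply _ (measurableSet_le measurable_const hφ)]
    using layer_cake

theorem lintegral_prod_withDensity_le_of_forall_superlevel [SFinite μ] {φ : α → ℝ}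
    (hφ : Measurable φ) (hφ0 : ∀ x, 0 ≤ φ x) {M : ℝ} (hφM : ∀ x, φ x ≤ M)
    {F : α × α → ℝ≥0∞} (hF : Measurable F) {G : α → ℝ≥0∞} (hG : Measurable G)
    {C : ℝ≥0∞} (hC : C ≠ ∞)
    (hFG : ∀ a > 0, ∫⁻ z in {x | a ≤ φ x} ×ˢ {x | a ≤ φ x}, F z ∂μ.prod μ ≤
      C * ∫⁻ x in {x | a ≤ φ x}, G x ∂μ) :
    ∫⁻ z, F z ∂(μ.withDensity fun x => ENNReal.ofReal (φ x)).prod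
        (μ.withDensity fun x => ENNReal.ofReal (φ x)) ≤
      ENNReal.ofReal M * (C * ∫⁻ x, G x ∂μ.withDensity fun x => ENNReal.ofReal (φ x)) := by
  have mul_le_mul_min (x y) : ENNReal.ofReal (φ x) * ENNReal.ofReal (φ y) ≤
      ENNReal.ofReal M * ENNReal.ofReal (min (φ x) (φ y)) := by
    rw [← max_mul_min, ← ENNReal.ofReal_min]
    grw [max_le (ENNReal.ofReal_le_ofReal (hφM x)) (ENNReal.ofReal_le_ofReal (hφM y))]
  rw [prod_withDensity hφ.ennreal_ofReal hφ.ennreal_ofReal,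
    lintegral_withDensity_eq_lintegral_mul _ (by fun_prop) hF,
    lintegral_withDensity_eq_lintegral_mul _ (by fun_prop) hG]
  calc ∫⁻ z, ENNReal.ofReal (φ z.1) * ENNReal.ofReal (φ z.2) * F z ∂μ.prod μ
    _ ≤ ∫⁻ z, ENNReal.ofReal M * (F z * ENNReal.ofReal (min (φ z.1) (φ z.2))) ∂μ.prod μ := by
      refine lintegral_mono fun z => ?_
      grw [mul_le_mul_min, mul_assoc, mul_comm (F z)]
    _ = ENNReal.ofReal M * ∫⁻ a in Ioi 0,
        ∫⁻ z in {x | a ≤ φ x} ×ˢ {x | a ≤ φ x}, F z ∂μ.prod μ := by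
      rw [lintegral_const_mul' _ _ ENNReal.ofReal_ne_top,
        lintegral_mul_ofReal_eq_lintegral_setLIntegral hF (by fun_prop)
          fun z => le_min (hφ0 _) (hφ0 _)]
      simp only [le_min_iff]
      rfl
    _ ≤ ENNReal.ofReal M * ∫⁻ a in Ioi 0, C * ∫⁻ x in {x | a ≤ φ x}, G x ∂μ :=
      mul_le_mul_right (setLIntegral_mono' measurableSet_Ioi hFG) _
    _ = ENNReal.ofReal M * (C * ∫⁻ x, ENNReal.ofReal (φ x) * G x ∂μ) := by
      rw [lintegral_const_mul' _ _ hC,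
        ← lintegral_mul_ofReal_eq_lintegral_setLIntegral hG hφ hφ0]
      simp only [mul_comm]

theorem integral_withDensity_ofReal {φ : α → ℝ} (hφ : Measurable φ) (hφ0 : ∀ x, 0 ≤ φ x)
    (f : α → ℝ) :
    ∫ x, f x ∂μ.withDensity (fun x => ENNReal.ofReal (φ x)) = ∫ x, f x * φ x ∂μ := by
  rw [integral_withDensity_eq_integral_toReal_smul hφ.ennreal_ofReal (by simp)]
  simp only [ENNReal.toReal_ofReal (hφ0 _), smul_eq_mul, mul_comm]

end LayerCake

section Weighted

theorem superlevel_subset_tsupport {X : Type*} [TopologicalSpace X] {φ : X → ℝ} {a : ℝ}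
    (ha : 0 < a) : {x | a ≤ φ x} ⊆ tsupport φ :=
  fun _ hx => subset_tsupport φ (ha.trans_le hx).ne'

theorem isCompact_superlevel_of_upperSemicontinuous {X : Type*} [TopologicalSpace X] {φ : X → ℝ}
    (hφ : UpperSemicontinuous φ) (hφ_supp : HasCompactSupport φ) {a : ℝ} (ha : 0 < a) :
    IsCompact {x | a ≤ φ x} :=
  hφ_supp.of_isClosed_subset (hφ.isClosed_preimage a) (superlevel_subset_tsupport ha)

theorem integrable_of_hasCompactSupport_of_le {X : Type*} [TopologicalSpace X]
    [MeasurableSpace X] {μ : Measure X} [IsFiniteMeasureOnCompacts μ] {φ : X → ℝ}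
    (hφ : Measurable φ) (hφ_supp : HasCompactSupport φ) (hφ0 : ∀ x, 0 ≤ φ x) {M : ℝ}
    (hφM : ∀ x, φ x ≤ M) : Integrable φ μ := by
  rw [← integrableOn_iff_integrable_of_support_subset (subset_tsupport φ)]
  exact Measure.integrableOn_of_bounded hφ_supp.measure_lt_top.ne hφ.aestronglyMeasurable
    (.of_forall fun x => (Real.norm_of_nonneg (hφ0 x)).trans_le (hφM x))

theorem ae_withDensity_ofReal_mem_tsupport {X : Type*} [TopologicalSpace X] [MeasurableSpace X]
    {μ : Measure X} {φ : X → ℝ} (hφ : Measurable φ) :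
    ∀ᵐ x ∂μ.withDensity fun x => ENNReal.ofReal (φ x), x ∈ tsupport φ :=
  (ae_withDensity_iff hφ.ennreal_ofReal).2 <| .of_forall fun _ hx =>
    subset_tsupport φ (ENNReal.ofReal_pos.1 (pos_iff_ne_zero.2 hx)).ne'

variable {E : Type*} [NormedAddCommGroup E] [InnerProductSpace ℝ E] [MeasurableSpace E]
  [BorelSpace E] [SecondCountableTopology E] {μ : Measure E} [IsFiniteMeasureOnCompacts μ]
  [SFinite μ] {φ u : E → ℝ}

theorem lintegral_prod_withDensity_sub_sq_le (hμ : PrekopaLeindler μ)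
    (hφ : UpperSemicontinuous φ) (hφ_supp : HasCompactSupport φ) (hφ0 : ∀ x, 0 ≤ φ x) {M : ℝ}
    (hφM : ∀ x, φ x ≤ M) (hφ_convex : ∀ a ∈ Ioc 0 M, Convex ℝ {x | a ≤ φ x})
    (hu : ContDiff ℝ 1 u) :
    ∫⁻ z, ENNReal.ofReal ((u z.1 - u z.2) ^ 2) ∂(μ.withDensity fun x => ENNReal.ofReal (φ x)).prod
        (μ.withDensity fun x => ENNReal.ofReal (φ x)) ≤
      ENNReal.ofReal M *
        (ENNReal.ofReal (Real.exp 1 * Metric.diam (tsupport φ) ^ 2 * μ.real (tsupport φ)) *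
          ∫⁻ x, ENNReal.ofReal (‖fderiv ℝ u x‖ ^ 2) ∂μ.withDensity
            fun x => ENNReal.ofReal (φ x)) := by
  have continuous_grad_sq : Continuous fun x => ‖fderiv ℝ u x‖ ^ 2 :=
    (hu.continuous_fderiv one_ne_zero).norm.pow 2
  have hu_measurable : Measurable u := hu.continuous.measurable
  refine lintegral_prod_withDensity_le_of_forall_superlevel hφ.measurable hφ0 hφM
    (by fun_prop) continuous_grad_sq.measurable.ennreal_ofReal ENNReal.ofReal_ne_top fun a ha => ?_
  obtain haM | hMa := le_or_gt a M
  · have superlevel_subset : {x | a ≤ φ x} ⊆ tsupport φ := superlevel_subset_tsupport ha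
    grw [setLIntegral_prod_sub_sq_le hμ (isCompact_superlevel_of_upperSemicontinuous hφ hφ_supp ha)
      (hφ_convex a ⟨ha, haM⟩) hu, Metric.diam_mono superlevel_subset hφ_supp.isBounded,
      measureReal_mono superlevel_subset hφ_supp.measure_lt_top.ne]
  · have superlevel_empty : {x | a ≤ φ x} = ∅ :=
      eq_empty_of_forall_notMem fun x hx => (hMa.trans_le hx).not_ge (hφM x)
    simp [superlevel_empty]

theorem integral_sub_average_sq_withDensity_le (hμ : PrekopaLeindler μ)
    (hφ : UpperSemicontinuous φ) (hφ_supp : HasCompactSupport φ) (hφ0 : ∀ x, 0 ≤ φ x) {M : ℝ}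
    (hφM : ∀ x, φ x ≤ M) (hφ_convex : ∀ a ∈ Ioc 0 M, Convex ℝ {x | a ≤ φ x})
    (hu : ContDiff ℝ 1 u) {ν : Measure E} (hν : ν = μ.withDensity fun x => ENNReal.ofReal (φ x)) :
    ν.real univ * ∫ x, (u x - ⨍ y, u y ∂ν) ^ 2 ∂ν ≤
      Real.exp 1 / 2 * M * Metric.diam (tsupport φ) ^ 2 * μ.real (tsupport φ) *
        ∫ x, ‖fderiv ℝ u x‖ ^ 2 ∂ν := by
  have continuous_grad_sq : Continuous fun x => ‖fderiv ℝ u x‖ ^ 2 :=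
    (hu.continuous_fderiv one_ne_zero).norm.pow 2
  have M_nonneg : 0 ≤ M := (hφ0 0).trans (hφM 0)
  have : IsFiniteMeasure ν := hν ▸ isFiniteMeasure_withDensity_ofReal
    (integrable_of_hasCompactSupport_of_le hφ.measurable hφ_supp hφ0 hφM).2
  have ae_mem : ∀ᵐ x ∂ν, x ∈ tsupport φ := hν ▸ ae_withDensity_ofReal_mem_tsupport hφ.measurable
  have u_memLp := memLp_two_of_continuous_of_ae_mem hφ_supp ae_mem hu.continuous
  have pairs := lintegral_prod_withDensity_sub_sq_le hμ hφ hφ_supp hφ0 hφM hφ_convex hu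
  rw [← hν, ← ofReal_integral_eq_lintegral_ofReal (integrable_prod_sub_sq u_memLp)
      (.of_forall fun z => sq_nonneg _),
    ← ofReal_integral_eq_lintegral_ofReal
      (integrable_of_continuous_of_ae_mem hφ_supp ae_mem continuous_grad_sq)
      (.of_forall fun x => sq_nonneg _),
    ← ENNReal.ofReal_mul (by positivity), ← ENNReal.ofReal_mul M_nonneg,
    ENNReal.ofReal_le_ofReal_iff (by positivity), integral_prod_sub_sq u_memLp] at pairs
  linarith

theorem weighted_poincare_general (hμ : PrekopaLeindler μ)
    (hφ : UpperSemicontinuous φ) (hφ_supp : HasCompactSupport φ) (hφ0 : ∀ x, 0 ≤ φ x) {M : ℝ}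
    (hφM : ∀ x, φ x ≤ M) (hφ_convex : ∀ a ∈ Ioc 0 M, Convex ℝ {x | a ≤ φ x})
    (hφ_pos : 0 < ∫ x, φ x ∂μ) (hu : ContDiff ℝ 1 u) :
    ∫ x, (u x - (∫ y, u y * φ y ∂μ) / ∫ y, φ y ∂μ) ^ 2 * φ x ∂μ ≤
      (Real.exp 1 / 2 * M * Metric.diam (tsupport φ) ^ 2 * μ.real (tsupport φ) /
        ∫ y, φ y ∂μ) * ∫ x, ‖fderiv ℝ u x‖ ^ 2 * φ x ∂μ := by
  set ν := μ.withDensity fun x => ENNReal.ofReal (φ x) with hν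
  have integral_ν (f : E → ℝ) : ∫ x, f x ∂ν = ∫ x, f x * φ x ∂μ :=
    integral_withDensity_ofReal hφ.measurable hφ0 f
  have mass_ν : ν.real univ = ∫ x, φ x ∂μ := by simpa using integral_ν 1
  have average_ν : ⨍ x, u x ∂ν = (∫ x, u x * φ x ∂μ) / ∫ x, φ x ∂μ := by
    rw [average_eq, mass_ν, integral_ν, smul_eq_mul, inv_mul_eq_div]
  rw [← average_ν, ← integral_ν, ← integral_ν, div_mul_eq_mul_div, le_div_iff₀' hφ_pos, ← mass_ν]
  exact integral_sub_average_sq_withDensity_le hμ hφ hφ_supp hφ0 hφM hφ_convex hu hν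

end Weighted

/-- Weighted Poincaré inequality with a weight `φ` whose superlevel sets are
convex. -/
theorem weighted_poincare (N : ℕ) (hN : 1 ≤ N)
    (φ : EuclideanSpace ℝ (Fin N) → ℝ) (hφc : Continuous φ)
    (hφs : HasCompactSupport φ) (hφne : (tsupport φ).Nonempty)
    (hφ0 : ∀ x, 0 ≤ φ x) (hφ1 : ∀ x, φ x ≤ 1)
    (hconv : ∀ a : ℝ, a ≤ 1 → Convex ℝ {x | a ≤ φ x})
    (u : EuclideanSpace ℝ (Fin N) → ℝ) (hu : ContDiff ℝ 1 u)
    (hu2 : Integrable (fun x => (u x) ^ 2))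
    (hDu2 : Integrable (fun x => ‖fderiv ℝ u x‖ ^ 2)) :
    (∫ x, (u x - (∫ y, u y * φ y) / (∫ y, φ y)) ^ 2 * φ x) ≤
      (2 * Metric.diam (tsupport φ) ^ 2 * (volume (tsupport φ)).toReal /
          ∫ y, φ y) *
        ∫ x, ‖fderiv ℝ u x‖ ^ 2 * φ x := by
  obtain ⟨x, hx⟩ : (Function.support φ).Nonempty := closure_nonempty_iff.1 hφne
  have φ_pos : 0 < ∫ y, φ y := hφc.integral_pos_of_hasCompactSupport_nonneg_nonzero hφs hφ0 hx
  have constant : Real.exp 1 / 2 * 1 ≤ 2 := by linarith [Real.exp_one_lt_three]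
  have gradient_nonneg : 0 ≤ ∫ x, ‖fderiv ℝ u x‖ ^ 2 * φ x :=
    integral_nonneg fun x => mul_nonneg (sq_nonneg _) (hφ0 x)
  grw [weighted_poincare_general (prekopaLeindler_of_isAddHaarMeasure volume)
    hφc.upperSemicontinuous hφs hφ0 hφ1 (fun a ha => hconv a ha.2) φ_pos hu, constant]
  rfl
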